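/- Let n ≥ 3, α ∈ (0,π/2), ρ > 0, and let p = ρa and q = −p (a ∈ S^{n−1}) be antipodal points of the standard cone C_α^n. Let L^T_{p,q} := ⋃_{ξ ∈ S^{n−2}_G} L_ξ([0,1]) ⊂ ℝ^n be the union of the images of all length-minimising geodesic segments of C_α^n from p to q, equipped with the Euclidean subspace topology. Then L^T_{p,q} is homeomorphic to the sphere S^{n−1}; in particular the apex o belongs to the bounded component of ℝ^n \ L^T_{p,q}. -/

import Mathlib

open scoped RealInnerProductSpace
open Real Set Filter

noncomputable section

/-- Euclidean `n`-space. -/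
abbrev En (n : ℕ) : Type := EuclideanSpace ℝ (Fin n)

/-- A (pointwise) metric tensor on `ℝⁿ`: to each point it assigns a bilinear form,
recorded simply as an `ℝ`-valued function of two tangent vectors (tangent spaces being
identified with `ℝⁿ`). -/
abbrev MetricTensor (n : ℕ) : Type := En n → En n → En n → ℝ

/-- The standard cone metric `g_{C_α^n}` of opening angle `α`, written in Cartesian
coordinates on `ℝⁿ \ {0}`:  `g_{C_α^n} = (1 - sin²α)·dρ⊗dρ + sin²α·(euclidean metric)`,
where `dρ(v) = ⟪v, x/‖x‖⟫`; this is `dρ⊗dρ + ρ² sin²α · g_{S^{n-1}}` in polar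
coordinates. -/
def coneMetric (n : ℕ) (α : ℝ) : MetricTensor n := fun x v w =>
  (1 - Real.sin α ^ 2) * (⟪v, x⟫ * ⟪w, x⟫ / ‖x‖ ^ 2) + Real.sin α ^ 2 * ⟪v, w⟫

variable {n : ℕ}

/-- Length of a curve on `[a,b]` with respect to a metric tensor. -/
def clen (G : MetricTensor n) (γ : ℝ → En n) (a b : ℝ) : ℝ :=
  ∫ t in a..b, Real.sqrt (G (γ t) (deriv γ t) (deriv γ t))

/-- Energy of a curve on `[a,b]` with respect to a metric tensor. -/
def cenergy (G : MetricTensor n) (γ : ℝ → En n) (a b : ℝ) : ℝ :=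
  ∫ t in a..b, G (γ t) (deriv γ t) (deriv γ t)

/-- The Riemannian (length) distance induced by a metric tensor:
the infimum of lengths of `C¹` curves joining the two points. -/
def rdist (G : MetricTensor n) (x y : En n) : ℝ :=
  sInf {L : ℝ | ∃ γ : ℝ → En n, ContDiff ℝ 1 γ ∧ γ 0 = x ∧ γ 1 = y ∧ L = clen G γ 0 1}

/-- The intrinsic (induced length) distance of the subset `S` for the metric tensor `G`:
the infimum of lengths of `C¹` curves joining the two points inside `S`. -/
def rdistIn (G : MetricTensor n) (S : Set (En n)) (x y : En n) : ℝ :=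
  sInf {L : ℝ | ∃ γ : ℝ → En n, ContDiff ℝ 1 γ ∧ (∀ t ∈ Set.Icc (0:ℝ) 1, γ t ∈ S) ∧
    γ 0 = x ∧ γ 1 = y ∧ L = clen G γ 0 1}

/-- `γ`, restricted to the parameter set `I`, is a geodesic of the distance `d` with
constant speed `c`: locally it is a homothety of factor `c` (for `c = 1` this is a local
isometry, i.e. the arc-length parametrisation). -/
def IsGeodesicOn (d : En n → En n → ℝ) (γ : ℝ → En n) (c : ℝ) (I : Set ℝ) : Prop :=
  ∀ t ∈ I, ∃ δ > 0, ∀ s ∈ I, ∀ u ∈ I, |s - t| < δ → |u - t| < δ →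
    d (γ s) (γ u) = c * |s - u|

/-- A length-minimising geodesic segment from `p` to `q`, parametrised on `[0,1]`
with constant speed `d p q`. -/
def IsMinSeg (d : En n → En n → ℝ) (γ : ℝ → En n) (p q : En n) : Prop :=
  γ 0 = p ∧ γ 1 = q ∧
    ∀ s ∈ Set.Icc (0:ℝ) 1, ∀ u ∈ Set.Icc (0:ℝ) 1, d (γ s) (γ u) = d p q * |s - u|

/-- The distance of the standard cone `C_α^n`. -/
def coneDist (n : ℕ) (α : ℝ) : En n → En n → ℝ := rdist (coneMetric n α)

/-- `(ℝⁿ, g)` is an asymptotically conical `C²` Riemannian manifold with opening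
angle `α` and asymptotic decay rate `μ`: `g` is a complete `C²` Riemannian metric and
`A := g - g_{C_α^n}` has components whose derivatives of order `k ≤ 2` are
`O(|x|^{-μ-k})` at infinity. -/
structure IsAsympConical (n : ℕ) (g : MetricTensor n) (α μ : ℝ) : Prop where
  symm : ∀ x v w, g x v w = g x w v
  add_left : ∀ x v w u, g x (v + w) u = g x v u + g x w u
  smul_left : ∀ x (a : ℝ) v u, g x (a • v) u = a * g x v u
  posdef : ∀ x v, v ≠ 0 → 0 < g x v v
  reg : ∀ i j : Fin n, ContDiff ℝ 2
    (fun x => g x (EuclideanSpace.single i 1) (EuclideanSpace.single j 1))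
  decay : ∀ i j : Fin n, ∃ C R : ℝ, 0 < C ∧ ∀ x : En n, R ≤ ‖x‖ → ∀ k : ℕ, k ≤ 2 →
    ‖iteratedFDeriv ℝ k (fun y =>
        g y (EuclideanSpace.single i 1) (EuclideanSpace.single j 1) -
        coneMetric n α y (EuclideanSpace.single i 1) (EuclideanSpace.single j 1)) x‖ ≤
      C * ‖x‖ ^ (-μ - (k : ℝ))
  complete : ∀ u : ℕ → En n,
    (∀ ε > 0, ∃ N, ∀ m ≥ N, ∀ k ≥ N, rdist g (u m) (u k) < ε) →
    ∃ x, ∀ ε > 0, ∃ N, ∀ m ≥ N, rdist g (u m) x < ε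

/-- `ex` is the exponential map of the metric tensor `g` at the point `x`
(tangent spaces being identified with `ℝⁿ`): `ex v = γ_v(1)` where `γ_v` is the
constant-speed geodesic with `γ_v(0) = x`, `γ̇_v(0) = v`. -/
def IsExpAt (g : MetricTensor n) (x : En n) (ex : En n → En n) : Prop :=
  ∀ v : En n, ∃ γ : ℝ → En n, γ 0 = x ∧ deriv γ 0 = v ∧
    IsGeodesicOn (rdist g) γ (Real.sqrt (g x v v)) Set.univ ∧ ex v = γ 1

/-- The exponential map of `g` exists and is proper at every point: preimages of
compact sets are compact. -/
def ProperExpAll (g : MetricTensor n) : Prop :=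
  ∀ x : En n, ∃ ex : En n → En n, IsExpAt g x ex ∧
    ∀ K : Set (En n), IsCompact K → IsCompact (ex ⁻¹' K)

/-- Second variation of the energy of `γ` on `[a,b]` along the variation field `V`
(using the global chart to form the variation `γ + s·V`). -/
def secondVar (g : MetricTensor n) (γ V : ℝ → En n) (a b : ℝ) : ℝ :=
  iteratedDeriv 2 (fun s : ℝ => cenergy g (fun t => γ t + s • V t) a b) 0

/-- The Morse index of `γ` on `[a,b]`, as a critical point of the energy, is at most
`m`: every linear space of `C¹` variation fields vanishing at the endpoints on which the
second variation of the energy is negative definite has dimension at most `m`. -/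
def MorseIndexLEOn (g : MetricTensor n) (γ : ℝ → En n) (a b : ℝ) (m : ℕ) : Prop :=
  ∀ W : Submodule ℝ (ℝ → En n),
    (∀ V ∈ W, ContDiff ℝ 1 V ∧ V a = 0 ∧ V b = 0) →
    (∀ V ∈ W, V ≠ 0 → secondVar g γ V a b < 0) →
    Module.rank ℝ W ≤ (m : Cardinal)

end

/-!
Multiplying by `sin α` the angle to the equator of the axis `ℝ a` develops every half-plane bounded
by the axis isometrically onto the same planar sector, of total angle `π sin α < π`. Globally the
development contracts the cone distance, because angles to the axis change no faster than
directions do, so a curve develops to one of no greater speed. A minimising segment from `p` to `q`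
therefore develops onto the straight chord between the images of its endpoints, and conversely
each half-plane lifts this chord to a minimising segment. Hence the trace is a level set of the
real part of the development. That function is continuous, positively homogeneous and positive away
from the apex, so its level set is a radial graph over the sphere, and by the intermediate value
theorem the complementary component of the apex stays in the bounded sublevel set.
-/

open InnerProductGeometry MeasureTheory Topology

noncomputable section

section Meridian

variable {E : Type*} [NormedAddCommGroup E] [InnerProductSpace ℝ E]

/-- The point at colatitude `θ` on the meridian of the unit sphere which runs from the pole `a`
through the equatorial point `ξ`. -/
def meridian (a ξ : E) (θ : ℝ) : E := cos θ • a + sin θ • ξ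

lemma meridian_zero (a ξ : E) : meridian a ξ 0 = a := by simp [meridian]

lemma meridian_pi (a ξ : E) : meridian a ξ π = -a := by simp [meridian]

lemma meridian_add_pi_div_two (a ξ : E) (θ : ℝ) :
    meridian a ξ (θ + π / 2) = cos θ • ξ - sin θ • a := by
  rw [meridian, cos_add_pi_div_two, sin_add_pi_div_two]
  module

lemma hasDerivAt_meridian (a ξ : E) (θ : ℝ) :
    HasDerivAt (meridian a ξ) (meridian a ξ (θ + π / 2)) θ := by
  refine (((hasDerivAt_cos θ).smul_const a).add ((hasDerivAt_sin θ).smul_const ξ)).congr_deriv ?_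
  rw [meridian_add_pi_div_two]
  module

lemma contDiff_meridian (a ξ : E) {k : WithTop ℕ∞} : ContDiff ℝ k (meridian a ξ) :=
  (contDiff_cos.smul contDiff_const).add (contDiff_sin.smul contDiff_const)

lemma inner_meridian {a ξ : E} (ha : ‖a‖ = 1) (hξ : ‖ξ‖ = 1) (haξ : ⟪a, ξ⟫ = 0) (θ φ : ℝ) :
    ⟪meridian a ξ θ, meridian a ξ φ⟫ = cos (θ - φ) := by
  have hξa : ⟪ξ, a⟫ = 0 := by rw [real_inner_comm, haξ]
  simp only [meridian, inner_add_left, inner_add_right, real_inner_smul_left,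
    real_inner_smul_right, real_inner_self_eq_norm_sq, ha, hξ, haξ, hξa, cos_sub]
  ring

lemma norm_meridian {a ξ : E} (ha : ‖a‖ = 1) (hξ : ‖ξ‖ = 1) (haξ : ⟪a, ξ⟫ = 0) (θ : ℝ) :
    ‖meridian a ξ θ‖ = 1 := by
  rw [norm_eq_sqrt_real_inner, inner_meridian ha hξ haξ, sub_self, cos_zero, sqrt_one]

lemma angle_meridian {a ξ : E} (ha : ‖a‖ = 1) (hξ : ‖ξ‖ = 1) (haξ : ⟪a, ξ⟫ = 0) {θ : ℝ}
    (hθ : θ ∈ Icc 0 π) : angle a (meridian a ξ θ) = θ := by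
  have h := inner_meridian ha hξ haξ 0 θ
  rw [meridian_zero, zero_sub, cos_neg] at h
  rw [angle, h, ha, norm_meridian ha hξ haξ, mul_one, div_one, arccos_cos hθ.1 hθ.2]

lemma span_singleton_orthogonal_ne_bot (hE : 1 < Module.rank ℝ E) (a : E) : (ℝ ∙ a)ᗮ ≠ ⊥ := by
  rw [Ne, Submodule.orthogonal_eq_bot_iff]
  intro htop
  have hle : Module.rank ℝ (ℝ ∙ a) ≤ 1 := by simpa using rank_span_le (R := ℝ) {a}
  rw [htop, rank_top] at hle
  exact hE.not_ge hle

lemma exists_norm_eq_one_of_mem {K : Submodule ℝ E} (hK : K ≠ ⊥) {w : E} (hw : w ∈ K) :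
    ∃ ξ ∈ K, ‖ξ‖ = 1 ∧ w = ‖w‖ • ξ := by
  by_cases hw0 : w = 0
  · obtain ⟨v, hv, hv0⟩ := K.exists_mem_ne_zero_of_ne_bot hK
    exact ⟨‖v‖⁻¹ • v, K.smul_mem _ hv, norm_smul_inv_norm hv0, by simp [hw0]⟩
  · exact ⟨‖w‖⁻¹ • w, K.smul_mem _ hw, norm_smul_inv_norm hw0,
      (smul_inv_smul₀ (norm_ne_zero_iff.2 hw0) w).symm⟩

lemma norm_sub_inner_smul {a : E} (ha : ‖a‖ = 1) (z : E) :
    ‖z - ⟪a, z⟫ • a‖ = ‖z‖ * sin (angle a z) := by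
  have hsq : ‖z - ⟪a, z⟫ • a‖ ^ 2 = (‖z‖ * sin (angle a z)) ^ 2 := by
    rw [norm_sub_sq_real, real_inner_smul_right, norm_smul, ha, real_inner_comm a z, mul_one,
      norm_eq_abs, sq_abs, mul_pow, sin_sq, ← cos_angle_mul_norm_mul_norm a z, ha]
    ring
  exact (pow_left_inj₀ (norm_nonneg _)
    (mul_nonneg (norm_nonneg _) (sin_angle_nonneg _ _)) two_ne_zero).1 hsq

lemma exists_meridian (hE : 1 < Module.rank ℝ E) {a : E} (ha : ‖a‖ = 1) (z : E) :
    ∃ ξ : E, ‖ξ‖ = 1 ∧ ⟪a, ξ⟫ = 0 ∧ z = ‖z‖ • meridian a ξ (angle a z) := by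
  have hw : z - ⟪a, z⟫ • a ∈ (ℝ ∙ a)ᗮ := by
    simp [Submodule.mem_orthogonal_singleton_iff_inner_right, inner_sub_right,
      real_inner_smul_right, ha]
  obtain ⟨ξ, hξ, hξ₁, hz⟩ := exists_norm_eq_one_of_mem (span_singleton_orthogonal_ne_bot hE a) hw
  refine ⟨ξ, hξ₁, Submodule.mem_orthogonal_singleton_iff_inner_right.1 hξ, ?_⟩
  have hcos := cos_angle_mul_norm_mul_norm a z
  rw [norm_sub_inner_smul ha, ← hcos, ha, sub_eq_iff_eq_add] at hz
  nth_rewrite 1 [hz]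
  rw [meridian]
  module

lemma smul_self_eq_norm_smul_meridian {a : E} (ha : ‖a‖ = 1) (ξ : E) (r : ℝ) :
    r • a = ‖r • a‖ • meridian a ξ (angle a (r • a)) := by
  have ha₀ : a ≠ 0 := norm_ne_zero_iff.1 (ha.trans_ne one_ne_zero)
  rw [norm_smul, ha, mul_one, norm_eq_abs]
  rcases lt_trichotomy r 0 with hr | rfl | hr
  · rw [angle_smul_right_of_neg _ _ hr, angle_self_neg_of_nonzero ha₀, meridian_pi,
      abs_of_neg hr, neg_smul_neg]
  · simp
  · rw [angle_smul_right_of_pos _ _ hr, angle_self ha₀, meridian_zero, abs_of_pos hr]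

end Meridian

section Develop

variable {E : Type*} [NormedAddCommGroup E] [InnerProductSpace ℝ E]

/-- The development of the cone with axis `ℝ a` into `ℂ`, where `s` is the sine of the opening
angle. A half-plane bounded by the axis, a Euclidean sector of angle `s π` in the cone metric, goes
isometrically onto the sector `|arg| ≤ s π / 2`. -/
def develop (s : ℝ) (a z : E) : ℂ := ‖z‖ * Complex.exp (↑(s * (angle a z - π / 2)) * Complex.I)

lemma norm_develop (s : ℝ) (a z : E) : ‖develop s a z‖ = ‖z‖ := by
  rw [develop, norm_mul, Complex.norm_exp_ofReal_mul_I, mul_one, Complex.norm_real, norm_norm]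

lemma develop_zero (s : ℝ) (a : E) : develop s a 0 = 0 := by simp [develop]

lemma develop_re (s : ℝ) (a z : E) :
    (develop s a z).re = ‖z‖ * cos (s * (angle a z - π / 2)) := by
  rw [develop, Complex.re_ofReal_mul, Complex.exp_ofReal_mul_I_re]

lemma develop_smul (s : ℝ) (a z : E) {r : ℝ} (hr : 0 < r) :
    develop s a (r • z) = r * develop s a z := by
  simp only [develop, angle_smul_right_of_pos a z hr, norm_smul, norm_of_nonneg hr.le,
    Complex.ofReal_mul, mul_assoc]

lemma continuous_develop (s : ℝ) {a : E} (ha : a ≠ 0) : Continuous (develop s a) := by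
  refine continuous_iff_continuousAt.2 fun z ↦ ?_
  rcases eq_or_ne z 0 with rfl | hz
  · rw [ContinuousAt, develop_zero, tendsto_zero_iff_norm_tendsto_zero]
    simpa only [norm_develop, norm_zero] using (continuous_norm (E := E)).tendsto 0
  · have hangle : ContinuousAt (fun w : E ↦ angle a w) z :=
      (continuousAt_angle (x := (a, z)) ha hz).comp (f := fun w ↦ (a, w)) (by fun_prop)
    unfold develop
    fun_prop

lemma abs_angle_sub_pi_div_two_le (a z : E) : |angle a z - π / 2| ≤ π / 2 :=
  abs_le.2 ⟨by linarith [angle_nonneg a z], by linarith [angle_le_pi a z]⟩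

lemma arg_develop {s : ℝ} (hs₀ : 0 < s) (hs₁ : s < 2) (a : E) {z : E} (hz : z ≠ 0) :
    (develop s a z).arg = s * (angle a z - π / 2) := by
  have hmem : s * (angle a z - π / 2) ∈ Ioc (-π) π := by
    constructor <;> nlinarith [abs_le.1 (abs_angle_sub_pi_div_two_le a z), pi_pos]
  rw [develop, Complex.arg_real_mul _ (norm_pos_iff.2 hz), Complex.arg_exp_mul_I, toIocMod_eq_self]
  simpa [two_mul] using hmem

lemma abs_arg_develop_le {s : ℝ} (hs₀ : 0 < s) (hs₁ : s < 2) (a z : E) :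
    |(develop s a z).arg| ≤ s * (π / 2) := by
  rcases eq_or_ne z 0 with rfl | hz
  · rw [develop_zero, Complex.arg_zero, abs_zero]
    positivity
  · rw [arg_develop hs₀ hs₁ a hz, abs_mul, abs_of_pos hs₀]
    exact mul_le_mul_of_nonneg_left (abs_angle_sub_pi_div_two_le a z) hs₀.le

lemma norm_mul_cos_le_develop_re {s : ℝ} (hs₀ : 0 ≤ s) (hs₁ : s ≤ 2) (a z : E) :
    ‖z‖ * cos (s * (π / 2)) ≤ (develop s a z).re := by
  rw [develop_re, ← cos_abs (s * (angle a z - π / 2)), abs_mul, abs_of_nonneg hs₀]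
  have hangle : |angle a z - π / 2| ≤ π / 2 := abs_angle_sub_pi_div_two_le a z
  have hle : s * (π / 2) ≤ π := by nlinarith [pi_pos]
  gcongr
  exact cos_le_cos_of_nonneg_of_le_pi (by positivity) hle (by gcongr)

lemma norm_ofReal_mul_exp_sub_sq (r t α β : ℝ) :
    ‖(r * Complex.exp (α * Complex.I) - t * Complex.exp (β * Complex.I) : ℂ)‖ ^ 2 =
      (r - t) ^ 2 + 4 * r * t * sin ((α - β) / 2) ^ 2 := by
  rw [sin_sq_eq_half_sub, mul_div_cancel₀ _ two_ne_zero, cos_sub, ← Complex.normSq_eq_norm_sq,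
    Complex.normSq_apply]
  simp only [Complex.sub_re, Complex.sub_im, Complex.re_ofReal_mul, Complex.im_ofReal_mul,
    Complex.exp_ofReal_mul_I_re, Complex.exp_ofReal_mul_I_im]
  linear_combination r ^ 2 * sin_sq_add_cos_sq α + t ^ 2 * sin_sq_add_cos_sq β

lemma abs_angle_sub_angle_le (a x y : E) : |angle a x - angle a y| ≤ angle x y := by
  rw [abs_sub_le_iff, sub_le_iff_le_add', sub_le_iff_le_add']
  exact ⟨angle_comm y x ▸ angle_le_angle_add_angle a y x, angle_le_angle_add_angle a x y⟩

lemma sinc_angle_div_two_ne_zero (x y : E) : sinc (angle x y / 2) ≠ 0 := by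
  rcases (angle_nonneg x y).eq_or_lt with h | h
  · simp [← h]
  · have hlt : angle x y / 2 < π := by linarith [angle_le_pi x y, pi_pos]
    rw [sinc_of_ne_zero (half_pos h).ne']
    exact div_ne_zero (sin_pos_of_pos_of_lt_pi (half_pos h) hlt).ne' (half_pos h).ne'

lemma norm_sub_sq_eq_sinc (x y : E) :
    ‖x - y‖ ^ 2 = (‖x‖ - ‖y‖) ^ 2 + ‖x‖ * ‖y‖ * angle x y ^ 2 * sinc (angle x y / 2) ^ 2 := by
  have hsinc : angle x y / 2 * sinc (angle x y / 2) = sin (angle x y / 2) := by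
    rcases eq_or_ne (angle x y / 2) 0 with h | h
    · simp [h]
    · rw [sinc_of_ne_zero h, mul_div_cancel₀ _ h]
  have hcos : cos (angle x y) = 1 - 2 * sin (angle x y / 2) ^ 2 := by
    rw [sin_sq_eq_half_sub, mul_div_cancel₀ _ two_ne_zero]
    ring
  rw [norm_sub_sq_real, ← cos_angle_mul_norm_mul_norm, hcos, ← hsinc]
  ring

/-- Homogeneous of degree two in the increments, so that it bounds slopes along a curve by slopes;
the `sinc` factor compares the angle with its chord and tends to `1`. -/
lemma norm_develop_sub_sq_le (s : ℝ) (a x y : E) :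
    ‖develop s a x - develop s a y‖ ^ 2 ≤ (‖x‖ - ‖y‖) ^ 2 +
      s ^ 2 * ((‖x - y‖ ^ 2 - (‖x‖ - ‖y‖) ^ 2) / sinc (angle x y / 2) ^ 2) := by
  have hsin : sin ((s * (angle a x - π / 2) - s * (angle a y - π / 2)) / 2) ^ 2 ≤
      (s * angle x y / 2) ^ 2 := by
    refine sq_le_sq.2 (abs_sin_le_abs.trans ?_)
    rw [← mul_sub, sub_sub_sub_cancel_right, abs_div, abs_div, abs_mul, abs_mul,
      abs_of_nonneg (angle_nonneg x y)]
    gcongr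
    exact abs_angle_sub_angle_le a x y
  calc ‖develop s a x - develop s a y‖ ^ 2
    _ ≤ (‖x‖ - ‖y‖) ^ 2 + 4 * ‖x‖ * ‖y‖ * (s * angle x y / 2) ^ 2 := by
      rw [develop, develop, norm_ofReal_mul_exp_sub_sq]
      gcongr
    _ = (‖x‖ - ‖y‖) ^ 2 + s ^ 2 * (‖x‖ * ‖y‖ * angle x y ^ 2) := by ring
    _ = _ := by
      rw [norm_sub_sq_eq_sinc, add_sub_cancel_left,
        mul_div_cancel_right₀ _ (pow_ne_zero 2 (sinc_angle_div_two_ne_zero x y))]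

end Develop

section ConeNorm

variable {E : Type*} [NormedAddCommGroup E] [InnerProductSpace ℝ E]

/-- The length of the tangent vector `v` at `x ≠ 0` in the cone metric, where `s` is the sine of the
opening angle: the radial part of `v` keeps its length and the spherical part is scaled by `s`. -/
def coneNorm (s : ℝ) (x v : E) : ℝ := √((1 - s ^ 2) * (⟪v, x⟫ / ‖x‖) ^ 2 + s ^ 2 * ‖v‖ ^ 2)

lemma coneNorm_self (s : ℝ) (x : E) : coneNorm s x x = ‖x‖ := by
  rw [coneNorm, real_inner_self_eq_norm_sq, sq ‖x‖, mul_self_div_self, ← sq, ← add_mul,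
    sub_add_cancel, one_mul, sqrt_sq (norm_nonneg x)]

lemma coneNorm_smul_left (s : ℝ) {k : ℝ} (hk : k ≠ 0) (x v : E) :
    coneNorm s (k • x) v = coneNorm s x v := by
  rw [coneNorm, coneNorm, real_inner_smul_right, norm_smul, div_pow, div_pow, mul_pow, mul_pow,
    norm_eq_abs, sq_abs, mul_div_mul_left _ _ (pow_ne_zero 2 hk)]

lemma coneNorm_le_norm {s : ℝ} (hs : |s| ≤ 1) (x v : E) : coneNorm s x v ≤ ‖v‖ := by
  have hradial : (⟪v, x⟫ / ‖x‖) ^ 2 ≤ ‖v‖ ^ 2 := by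
    refine sq_le_sq.2 ?_
    rw [abs_div, abs_norm, abs_norm]
    exact div_le_of_le_mul₀ (norm_nonneg x) (norm_nonneg v) (abs_real_inner_le_norm v x)
  have hs' : 0 ≤ 1 - s ^ 2 := sub_nonneg.2 ((sq_le_one_iff_abs_le_one s).2 hs)
  refine sqrt_le_iff.2 ⟨norm_nonneg v, ?_⟩
  calc (1 - s ^ 2) * (⟪v, x⟫ / ‖x‖) ^ 2 + s ^ 2 * ‖v‖ ^ 2
    _ ≤ (1 - s ^ 2) * ‖v‖ ^ 2 + s ^ 2 * ‖v‖ ^ 2 := by gcongr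
    _ = ‖v‖ ^ 2 := by ring

lemma tendsto_coneNorm (s : ℝ) {ι : Type*} {l : Filter ι} {f g : ι → E} {x v : E} (hx : x ≠ 0)
    (hf : Tendsto f l (𝓝 x)) (hg : Tendsto g l (𝓝 v)) :
    Tendsto (fun i ↦ coneNorm s (f i) (g i)) l (𝓝 (coneNorm s x v)) :=
  (((((hg.inner hf).div hf.norm (norm_ne_zero_iff.2 hx)).pow 2).const_mul _).add
    ((hg.norm.pow 2).const_mul _)).sqrt

/-- At the apex itself `coneNorm s 0 v = |s| * ‖v‖` by division by zero; a curve through the apex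
moves radially there, so the limit of its speed is the full `‖γ' t‖`. -/
lemma tendsto_coneNorm_of_eq_zero {s : ℝ} (hs : |s| ≤ 1) {γ γ' : ℝ → E} {t : ℝ}
    (hγ : HasDerivAt γ (γ' t) t) (hγ' : ContinuousAt γ' t) (h₀ : γ t = 0) :
    Tendsto (fun z ↦ coneNorm s (γ z) (γ' z)) (𝓝[≠] t) (𝓝 ‖γ' t‖) := by
  have hlim : Tendsto γ' (𝓝[≠] t) (𝓝 (γ' t)) := hγ'.tendsto.mono_left nhdsWithin_le_nhds
  by_cases hv : γ' t = 0
  · rw [hv, norm_zero]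
    refine squeeze_zero (fun z ↦ sqrt_nonneg _) (fun z ↦ coneNorm_le_norm hs _ _) ?_
    simpa only [hv, norm_zero] using hlim.norm
  · rw [← coneNorm_self s]
    refine (tendsto_coneNorm s hv hγ.tendsto_slope hlim).congr' ?_
    filter_upwards [self_mem_nhdsWithin] with z hz
    rw [slope_def_module, h₀, sub_zero, coneNorm_smul_left _ (inv_ne_zero (sub_ne_zero.2 hz))]

lemma intervalIntegrable_coneNorm {s : ℝ} (hs : |s| ≤ 1) {γ γ' : ℝ → E} (hγ : Continuous γ)
    (hγ' : Continuous γ') (b c : ℝ) :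
    IntervalIntegrable (fun t ↦ coneNorm s (γ t) (γ' t)) volume b c := by
  refine (hγ'.norm.intervalIntegrable b c).mono_fun ?_ (Eventually.of_forall fun t ↦ ?_)
  · have hinner : Measurable fun t ↦ ⟪γ' t, γ t⟫ := (hγ'.inner hγ).measurable
    have hnorm : Measurable fun t ↦ ‖γ t‖ := hγ.norm.measurable
    have hnorm' : Measurable fun t ↦ ‖γ' t‖ := hγ'.norm.measurable
    unfold coneNorm
    fun_prop
  · exact ((norm_of_nonneg (sqrt_nonneg _)).trans_le (coneNorm_le_norm hs _ _)).trans_eq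
      (norm_norm _).symm

end ConeNorm

section Contraction

lemma norm_sub_le_integral_of_slope_le {F : Type*} [NormedAddCommGroup F] [NormedSpace ℝ F]
    {f : ℝ → F} {g : ℝ → ℝ} {b c : ℝ} (hbc : b ≤ c) (hf : ContinuousOn f (Icc b c))
    (hg : IntervalIntegrable g volume b c)
    (hslope : ∀ t ∈ Ico b c, ∃ l, Tendsto g (𝓝[>] t) (𝓝 l) ∧
      ∀ r > l, ∀ᶠ z in 𝓝[>] t, ‖slope f t z‖ < r) :
    ‖f c - f b‖ ≤ ∫ t in b..c, g t := by
  choose! l hl hlr using hslope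
  refine image_le_of_liminf_slope_right_le_deriv_boundary (f := fun t ↦ ‖f t - f b‖)
    (B := fun u ↦ ∫ t in b..u, g t) (B' := l) (by fun_prop) (by simp) ?_ (fun t ht ↦ ?_)
    (fun t ht r hr ↦ Eventually.frequently ?_) (right_mem_Icc.2 hbc)
  · rw [← uIcc_of_le hbc]
    exact intervalIntegral.continuousOn_primitive_interval' hg left_mem_uIcc
  · refine intervalIntegral.integral_hasDerivWithinAt_of_tendsto_ae_right
      (hg.mono_set (uIcc_subset_uIcc_left ?_)) ⟨Ioc b c, Ioc_mem_nhdsGT_of_mem ht,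
        hg.1.aestronglyMeasurable⟩ ((hl t ht).mono_left inf_le_left)
    exact Icc_subset_uIcc (Ico_subset_Icc_self ht)
  · filter_upwards [hlr t ht r hr, self_mem_nhdsWithin] with z hz htz
    refine lt_of_le_of_lt ?_ hz
    have htz' : 0 < z - t := sub_pos.2 htz
    rw [slope_def_module, slope_def_module, norm_smul, norm_inv, norm_of_nonneg htz'.le,
      smul_eq_mul]
    gcongr
    simpa only [sub_sub_sub_cancel_right] using norm_sub_norm_le (f z - f b) (f t - f b)

variable {E : Type*} [NormedAddCommGroup E] [InnerProductSpace ℝ E]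

lemma hasDerivAt_norm {γ : ℝ → E} {v : E} {t : ℝ} (hγ : HasDerivAt γ v t) (h₀ : γ t ≠ 0) :
    HasDerivAt (fun z ↦ ‖γ z‖) (⟪v, γ t⟫ / ‖γ t‖) t := by
  have h := hγ.norm_sq.sqrt (pow_ne_zero 2 (norm_ne_zero_iff.2 h₀))
  simp only [sqrt_sq (norm_nonneg _)] at h
  rwa [mul_div_mul_left _ _ two_ne_zero, real_inner_comm] at h

lemma norm_slope_develop_sq_le (s : ℝ) (a : E) (γ : ℝ → E) (t z : ℝ) :
    ‖slope (fun u ↦ develop s a (γ u)) t z‖ ^ 2 ≤ slope (fun u ↦ ‖γ u‖) t z ^ 2 +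
      s ^ 2 * ((‖slope γ t z‖ ^ 2 - slope (fun u ↦ ‖γ u‖) t z ^ 2) /
        sinc (angle (γ z) (γ t) / 2) ^ 2) := by
  simp only [slope_def_module, norm_smul, smul_eq_mul, mul_pow, norm_eq_abs, sq_abs]
  refine (mul_le_mul_of_nonneg_left (norm_develop_sub_sq_le s a (γ z) (γ t))
    (sq_nonneg (z - t)⁻¹)).trans_eq ?_
  ring

lemma eventually_norm_slope_develop_lt {s : ℝ} (a : E) {γ : ℝ → E} {v : E} {t r : ℝ}
    (hγ : HasDerivAt γ v t) (h₀ : γ t ≠ 0) (hr : coneNorm s (γ t) v < r) :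
    ∀ᶠ z in 𝓝[≠] t, ‖slope (fun u ↦ develop s a (γ u)) t z‖ < r := by
  have hsinc : Tendsto (fun z ↦ sinc (angle (γ z) (γ t) / 2)) (𝓝[≠] t) (𝓝 1) := by
    have hangle : ContinuousAt (fun z ↦ angle (γ z) (γ t)) t :=
      (continuousAt_angle (x := (γ t, γ t)) h₀ h₀).comp (f := fun z ↦ (γ z, γ t))
        (hγ.continuousAt.prodMk continuousAt_const)
    have h := (continuous_sinc.continuousAt.comp (hangle.div_const 2)).tendsto
    simpa [angle_self h₀, Function.comp_def] using h.mono_left nhdsWithin_le_nhds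
  have hnorm := (hasDerivAt_norm hγ h₀).tendsto_slope
  have hbound := (hnorm.pow 2).add ((((hγ.tendsto_slope.norm.pow 2).sub (hnorm.pow 2)).div
    (hsinc.pow 2) (pow_ne_zero 2 one_ne_zero)).const_mul (s ^ 2))
  have hr₀ : 0 < r := (sqrt_nonneg _).trans_lt hr
  refine (hbound.eventually_lt_const ((sqrt_lt' hr₀).1 (lt_of_eq_of_lt ?_ hr))).mono fun z hz ↦ ?_
  · rw [coneNorm]
    congr 1
    ring
  · exact lt_of_pow_lt_pow_left₀ 2 hr₀.le ((norm_slope_develop_sq_le s a γ t z).trans_lt hz)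

theorem norm_develop_sub_le_integral_coneNorm {s : ℝ} (hs : |s| ≤ 1) {a : E} (ha : a ≠ 0)
    {γ : ℝ → E} (hγ : ContDiff ℝ 1 γ) {b c : ℝ} (hbc : b ≤ c) :
    ‖develop s a (γ c) - develop s a (γ b)‖ ≤ ∫ t in b..c, coneNorm s (γ t) (deriv γ t) := by
  have hderiv : ∀ t, HasDerivAt γ (deriv γ t) t :=
    fun t ↦ (hγ.differentiable one_ne_zero t).hasDerivAt
  have hγ' : Continuous (deriv γ) := hγ.continuous_deriv le_rfl
  refine norm_sub_le_integral_of_slope_le (f := fun t ↦ develop s a (γ t)) hbc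
    ((continuous_develop s ha).comp hγ.continuous).continuousOn
    (intervalIntegrable_coneNorm hs hγ.continuous hγ' b c) fun t _ ↦ ?_
  by_cases h₀ : γ t = 0
  · refine ⟨‖deriv γ t‖, (tendsto_coneNorm_of_eq_zero hs (hderiv t) hγ'.continuousAt h₀).mono_left
      (nhdsGT_le_nhdsNE t), fun r hr ↦ ?_⟩
    have hlt := (hderiv t).tendsto_slope.norm.eventually_lt_const hr
    filter_upwards [nhdsGT_le_nhdsNE t hlt] with z hz
    simpa only [slope_def_module, norm_smul, h₀, develop_zero, sub_zero, norm_develop] using hz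
  · exact ⟨coneNorm s (γ t) (deriv γ t), (tendsto_coneNorm s h₀ hγ.continuous.continuousAt
      hγ'.continuousAt).mono_left nhdsWithin_le_nhds, fun r hr ↦
        nhdsGT_le_nhdsNE t (eventually_norm_slope_develop_lt a (hderiv t) h₀ hr)⟩

end Contraction

section Undevelop

variable {E : Type*} [NormedAddCommGroup E] [InnerProductSpace ℝ E]

/-- The inverse of `develop s a` on the half-plane bounded by the axis `ℝ a` and containing the unit
vector `ξ ⟂ a`. Outside the sector `|arg w| ≤ s π / 2` the image lies beyond the axis. -/
def undevelop (s : ℝ) (a ξ : E) (w : ℂ) : E := ‖w‖ • meridian a ξ (w.arg / s + π / 2)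

lemma undevelop_develop {s : ℝ} (hs₀ : 0 < s) (hs₁ : s < 2) {a ξ z : E}
    (hz : z = ‖z‖ • meridian a ξ (angle a z)) : undevelop s a ξ (develop s a z) = z := by
  rcases eq_or_ne z 0 with rfl | hz₀
  · rw [develop_zero, undevelop, norm_zero, zero_smul]
  · rw [undevelop, norm_develop, arg_develop hs₀ hs₁ a hz₀, mul_div_cancel_left₀ _ hs₀.ne',
      sub_add_cancel, ← hz]

lemma develop_undevelop {s : ℝ} (hs₀ : 0 < s) {a ξ : E} (ha : ‖a‖ = 1) (hξ : ‖ξ‖ = 1)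
    (haξ : ⟪a, ξ⟫ = 0) {w : ℂ} (hw : |w.arg| ≤ s * (π / 2)) :
    develop s a (undevelop s a ξ w) = w := by
  rcases eq_or_ne w 0 with rfl | hw₀
  · rw [undevelop, norm_zero, zero_smul, develop_zero]
  have hmem : w.arg / s + π / 2 ∈ Icc 0 π := by
    have h : |w.arg / s| ≤ π / 2 := by rwa [abs_div, abs_of_pos hs₀, div_le_iff₀' hs₀]
    constructor <;> linarith [abs_le.1 h]
  rw [undevelop, develop_smul _ _ _ (norm_pos_iff.2 hw₀), develop, norm_meridian ha hξ haξ,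
    angle_meridian ha hξ haξ hmem, add_sub_cancel_right, mul_div_cancel₀ _ hs₀.ne',
    Complex.ofReal_one, one_mul, Complex.norm_mul_exp_arg_mul_I]

lemma contDiff_undevelop (s : ℝ) (a ξ : E) {w : ℝ → ℂ} (hw : ContDiff ℝ 1 w)
    (hslit : ∀ t, w t ∈ Complex.slitPlane) : ContDiff ℝ 1 fun t ↦ undevelop s a ξ (w t) := by
  have harg : ContDiff ℝ 1 fun t ↦ (w t).arg := by
    refine contDiff_iff_contDiffAt.2 fun t ↦ ?_
    have hlog := (Complex.contDiffAt_log (n := 1) (hslit t)).restrict_scalars ℝ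
    simpa only [Function.comp_def, Complex.imCLM_apply, Complex.log_im] using
      Complex.imCLM.contDiff.contDiffAt.comp t (hlog.comp t hw.contDiffAt)
  exact (hw.norm ℝ fun t ↦ Complex.slitPlane_ne_zero (hslit t)).smul
    ((contDiff_meridian a ξ).comp ((harg.div_const s).add contDiff_const))

lemma hasDerivAt_norm_complex {w : ℝ → ℂ} {w' : ℂ} {t : ℝ} (hw : HasDerivAt w w' t)
    (h₀ : w t ≠ 0) : HasDerivAt (fun u ↦ ‖w u‖) (‖w t‖ * (w' / w t).re) t := by
  refine (hasDerivAt_norm hw h₀).congr_deriv ?_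
  have hre : (w' / w t).re = ⟪w', w t⟫ / ‖w t‖ ^ 2 := by
    rw [Complex.inner, Complex.div_re, Complex.normSq_eq_norm_sq, ← add_div, Complex.mul_re,
      Complex.conj_re, Complex.conj_im]
    ring
  rw [hre, sq, div_mul_eq_div_div, mul_div_cancel₀ _ (norm_ne_zero_iff.2 h₀)]

lemma hasDerivAt_arg {w : ℝ → ℂ} {w' : ℂ} {t : ℝ} (hw : HasDerivAt w w' t)
    (hslit : w t ∈ Complex.slitPlane) : HasDerivAt (fun u ↦ (w u).arg) (w' / w t).im t := by
  simpa only [Function.comp_def, Complex.imCLM_apply, Complex.log_im] using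
    Complex.imCLM.hasFDerivAt.comp_hasDerivAt t (hw.clog_real hslit)

lemma hasDerivAt_undevelop (s : ℝ) (a ξ : E) {w : ℝ → ℂ} {w' : ℂ} {t : ℝ}
    (hw : HasDerivAt w w' t) (hslit : w t ∈ Complex.slitPlane) :
    HasDerivAt (fun u ↦ undevelop s a ξ (w u))
      ((‖w t‖ * (w' / w t).re) • meridian a ξ ((w t).arg / s + π / 2) +
        (‖w t‖ * ((w' / w t).im / s)) • meridian a ξ ((w t).arg / s + π / 2 + π / 2)) t := by
  refine ((hasDerivAt_norm_complex hw (Complex.slitPlane_ne_zero hslit)).smul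
    ((hasDerivAt_meridian a ξ _).scomp t
      (((hasDerivAt_arg hw hslit).div_const s).add_const (π / 2)))).congr_deriv ?_
  simp only [Function.comp_apply]
  module

lemma coneNorm_smul_add_smul (s : ℝ) {e f : E} (he : ‖e‖ = 1) (hf : ‖f‖ = 1) (hef : ⟪e, f⟫ = 0)
    {r : ℝ} (hr : r ≠ 0) (A B : ℝ) :
    coneNorm s (r • e) (A • e + B • f) = √(A ^ 2 + (s * B) ^ 2) := by
  have hfe : ⟪f, e⟫ = 0 := by rw [real_inner_comm, hef]
  have hee : ⟪e, e⟫ = 1 := by rw [real_inner_self_eq_norm_sq, he, one_pow]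
  have hff : ⟪f, f⟫ = 1 := by rw [real_inner_self_eq_norm_sq, hf, one_pow]
  rw [coneNorm_smul_left s hr, coneNorm, ← real_inner_self_eq_norm_sq (_ + _)]
  simp only [inner_add_left, inner_add_right, real_inner_smul_left, real_inner_smul_right,
    he, hee, hff, hef, hfe]
  ring_nf

lemma coneNorm_deriv_undevelop {s : ℝ} (hs : s ≠ 0) {a ξ : E} (ha : ‖a‖ = 1) (hξ : ‖ξ‖ = 1)
    (haξ : ⟪a, ξ⟫ = 0) {w : ℝ → ℂ} {w' : ℂ} {t : ℝ} (hw : HasDerivAt w w' t)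
    (hslit : w t ∈ Complex.slitPlane) :
    coneNorm s (undevelop s a ξ (w t)) (deriv (fun u ↦ undevelop s a ξ (w u)) t) = ‖w'‖ := by
  have hw₀ : ‖w t‖ ≠ 0 := norm_ne_zero_iff.2 (Complex.slitPlane_ne_zero hslit)
  have hperp (θ : ℝ) : ⟪meridian a ξ θ, meridian a ξ (θ + π / 2)⟫ = 0 := by
    rw [inner_meridian ha hξ haξ, sub_add_cancel_left, cos_neg, cos_pi_div_two]
  rw [(hasDerivAt_undevelop s a ξ hw hslit).deriv, undevelop, coneNorm_smul_add_smul s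
    (norm_meridian ha hξ haξ _) (norm_meridian ha hξ haξ _) (hperp _) hw₀, mul_left_comm,
    mul_div_cancel₀ _ hs, mul_pow, mul_pow, ← mul_add, sqrt_mul (sq_nonneg _),
    sqrt_sq (norm_nonneg _), ← Complex.norm_eq_sqrt_sq_add_sq, norm_div, mul_div_cancel₀ _ hw₀]

end Undevelop

section Chord

lemma abs_arg_le_iff {φ : ℝ} (hφ : φ ∈ Icc 0 π) (w : ℂ) :
    |w.arg| ≤ φ ↔ ‖w‖ * cos φ ≤ w.re := by
  rcases eq_or_ne w 0 with rfl | hw₀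
  · simpa using hφ.1
  · rw [← strictAntiOn_cos.le_iff_ge hφ ⟨abs_nonneg _, Complex.abs_arg_le_pi w⟩, cos_abs,
      Complex.cos_arg hw₀, le_div_iff₀' (norm_pos_iff.2 hw₀)]

lemma convex_setOf_abs_arg_le {φ : ℝ} (hφ : φ ∈ Icc 0 (π / 2)) :
    Convex ℝ {w : ℂ | |w.arg| ≤ φ} := by
  have hcos : 0 ≤ cos φ := cos_nonneg_of_mem_Icc ⟨by linarith [hφ.1, pi_pos], hφ.2⟩
  simp only [abs_arg_le_iff ⟨hφ.1, hφ.2.trans (half_le_self pi_pos.le)⟩]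
  intro z hz w hw b c hb hc _
  calc ‖b • z + c • w‖ * cos φ
      ≤ (‖b • z‖ + ‖c • w‖) * cos φ := mul_le_mul_of_nonneg_right (norm_add_le _ _) hcos
    _ = b * (‖z‖ * cos φ) + c * (‖w‖ * cos φ) := by
      rw [norm_smul, norm_smul, norm_of_nonneg hb, norm_of_nonneg hc]
      ring
    _ ≤ b * z.re + c * w.re :=
      add_le_add (mul_le_mul_of_nonneg_left hz hb) (mul_le_mul_of_nonneg_left hw hc)
    _ = (b • z + c • w).re := by simp

lemma mem_segment_exp_iff {ρ : ℝ} (hρ : 0 ≤ ρ) (φ : ℝ) {w : ℂ} :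
    w ∈ segment ℝ (ρ * Complex.exp (↑(-φ) * Complex.I)) (ρ * Complex.exp (φ * Complex.I)) ↔
      w.re = ρ * cos φ ∧ ‖w‖ ≤ ρ := by
  have hvert (m y : ℝ) : AffineMap.lineMap (m : ℂ) (m + Complex.I) y = (⟨m, y⟩ : ℂ) := by
    apply Complex.ext <;> simp [AffineMap.lineMap_apply]
  have hexp (ψ : ℝ) : (ρ * Complex.exp (ψ * Complex.I) : ℂ) = ⟨ρ * cos ψ, ρ * sin ψ⟩ := by
    apply Complex.ext <;>
      simp only [Complex.re_ofReal_mul, Complex.im_ofReal_mul, Complex.exp_ofReal_mul_I_re,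
        Complex.exp_ofReal_mul_I_im]
  have hmem (y h : ℝ) : y ∈ uIcc (-h) h ↔ y ^ 2 ≤ h ^ 2 := by
    rw [mem_uIcc, sq_le_sq]
    grind
  rw [hexp, hexp, cos_neg, sin_neg, mul_neg, ← hvert, ← hvert, ← image_segment, segment_eq_uIcc]
  simp only [hvert, mem_image, hmem, Complex.ext_iff, ← sq_le_sq₀ (norm_nonneg w) hρ,
    Complex.sq_norm, Complex.normSq_apply]
  constructor
  · rintro ⟨y, hy, hre, him⟩
    refine ⟨hre.symm, ?_⟩
    rw [← hre, ← him]
    linear_combination hy + ρ ^ 2 * sin_sq_add_cos_sq φ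
  · rintro ⟨hre, hle⟩
    refine ⟨w.im, ?_, hre.symm, rfl⟩
    rw [hre] at hle
    linear_combination hle - ρ ^ 2 * sin_sq_add_cos_sq φ

variable {E : Type*} [NormedAddCommGroup E] [InnerProductSpace ℝ E]

lemma mem_segment_develop_iff (s : ℝ) {a : E} (ha : ‖a‖ = 1) {ρ : ℝ} (hρ : 0 < ρ) {w : ℂ} :
    w ∈ segment ℝ (develop s a (ρ • a)) (develop s a (-(ρ • a))) ↔
      w.re = ρ * cos (s * (π / 2)) ∧ ‖w‖ ≤ ρ := by
  have ha₀ : a ≠ 0 := norm_ne_zero_iff.1 (ha.trans_ne one_ne_zero)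
  rw [← smul_neg, develop_smul s a _ hρ, develop_smul s a _ hρ, develop, develop, norm_neg, ha,
    angle_self ha₀, angle_self_neg_of_nonzero ha₀, zero_sub, mul_neg, sub_half,
    Complex.ofReal_one, one_mul, one_mul, mem_segment_exp_iff hρ.le]

end Chord

section ConeDist

variable {n : ℕ}

lemma rdist_le_clen (G : MetricTensor n) {γ : ℝ → En n} (hγ : ContDiff ℝ 1 γ) :
    rdist G (γ 0) (γ 1) ≤ clen G γ 0 1 := by
  refine csInf_le ⟨0, ?_⟩ ⟨γ, hγ, rfl, rfl, rfl⟩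
  rintro L ⟨c, -, -, -, rfl⟩
  exact intervalIntegral.integral_nonneg zero_le_one fun _ _ ↦ sqrt_nonneg _

lemma le_rdist {G : MetricTensor n} {x y : En n} {L : ℝ}
    (h : ∀ γ : ℝ → En n, ContDiff ℝ 1 γ → γ 0 = x → γ 1 = y → L ≤ clen G γ 0 1) :
    L ≤ rdist G x y := by
  refine le_csInf ⟨_, AffineMap.lineMap x y, AffineMap.contDiff_lineMap x y,
    AffineMap.lineMap_apply_zero x y, AffineMap.lineMap_apply_one x y, rfl⟩ ?_
  rintro _ ⟨γ, hγ, h₀, h₁, rfl⟩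
  exact h γ hγ h₀ h₁

lemma sqrt_coneMetric (α : ℝ) (x v : En n) :
    √(coneMetric n α x v v) = coneNorm (sin α) x v := by
  rw [coneMetric, coneNorm, real_inner_self_eq_norm_sq, div_pow, sq ⟪v, x⟫]

lemma clen_coneMetric (α : ℝ) (γ : ℝ → En n) (b c : ℝ) :
    clen (coneMetric n α) γ b c = ∫ t in b..c, coneNorm (sin α) (γ t) (deriv γ t) := by
  simp only [clen, sqrt_coneMetric]

theorem dist_develop_le_coneDist (α : ℝ) {a : En n} (ha : a ≠ 0) (x y : En n) :
    dist (develop (sin α) a x) (develop (sin α) a y) ≤ coneDist n α x y := by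
  refine le_rdist fun γ hγ h₀ h₁ ↦ ?_
  rw [clen_coneMetric, ← h₀, ← h₁, dist_comm, dist_eq_norm]
  exact norm_develop_sub_le_integral_coneNorm (abs_sin_le_one α) ha hγ zero_le_one

variable {α : ℝ} {a ξ : En n} {m : ℝ} {w₀ w₁ : ℂ}

lemma re_lineMap_of_re_eq (hw₀ : w₀.re = m) (hw₁ : w₁.re = m) (t : ℝ) :
    (AffineMap.lineMap w₀ w₁ t).re = m := by
  simp [AffineMap.lineMap_apply, hw₀, hw₁]

lemma coneDist_undevelop_le (hs : sin α ≠ 0) (ha : ‖a‖ = 1) (hξ : ‖ξ‖ = 1) (haξ : ⟪a, ξ⟫ = 0)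
    (hm : 0 < m) (hw₀ : w₀.re = m) (hw₁ : w₁.re = m) :
    coneDist n α (undevelop (sin α) a ξ w₀) (undevelop (sin α) a ξ w₁) ≤ dist w₀ w₁ := by
  have hslit (t : ℝ) : AffineMap.lineMap w₀ w₁ t ∈ Complex.slitPlane :=
    Or.inl (by rwa [re_lineMap_of_re_eq hw₀ hw₁])
  have hspeed (t : ℝ) := coneNorm_deriv_undevelop hs ha hξ haξ
    (AffineMap.hasDerivAt_lineMap (x := t)) (hslit t)
  have hle := rdist_le_clen (coneMetric n α)
    (contDiff_undevelop (sin α) a ξ (AffineMap.contDiff_lineMap (𝕜 := ℝ) w₀ w₁) hslit)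
  simpa only [coneDist, clen_coneMetric, hspeed, intervalIntegral.integral_const, sub_zero,
    one_smul, AffineMap.lineMap_apply_zero, AffineMap.lineMap_apply_one, ← dist_eq_norm,
    dist_comm w₁] using hle

lemma coneDist_undevelop (hs : 0 < sin α) (ha : ‖a‖ = 1) (hξ : ‖ξ‖ = 1) (haξ : ⟪a, ξ⟫ = 0)
    (hm : 0 < m) (hw₀ : w₀.re = m) (hw₁ : w₁.re = m) (harg₀ : |w₀.arg| ≤ sin α * (π / 2))
    (harg₁ : |w₁.arg| ≤ sin α * (π / 2)) :
    coneDist n α (undevelop (sin α) a ξ w₀) (undevelop (sin α) a ξ w₁) = dist w₀ w₁ := by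
  refine (coneDist_undevelop_le hs.ne' ha hξ haξ hm hw₀ hw₁).antisymm ?_
  have ha₀ : a ≠ 0 := norm_ne_zero_iff.1 (ha.trans_ne one_ne_zero)
  simpa only [develop_undevelop hs ha hξ haξ harg₀, develop_undevelop hs ha hξ haξ harg₁] using
    dist_develop_le_coneDist α ha₀ (undevelop (sin α) a ξ w₀) (undevelop (sin α) a ξ w₁)

lemma isMinSeg_undevelop (hs : 0 < sin α) (ha : ‖a‖ = 1) (hξ : ‖ξ‖ = 1) (haξ : ⟪a, ξ⟫ = 0)
    (hm : 0 < m) (hw₀ : w₀.re = m) (hw₁ : w₁.re = m) (harg₀ : |w₀.arg| ≤ sin α * (π / 2))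
    (harg₁ : |w₁.arg| ≤ sin α * (π / 2)) :
    IsMinSeg (coneDist n α) (fun t ↦ undevelop (sin α) a ξ (AffineMap.lineMap w₀ w₁ t))
      (undevelop (sin α) a ξ w₀) (undevelop (sin α) a ξ w₁) := by
  have hre := re_lineMap_of_re_eq hw₀ hw₁
  have hφ : sin α * (π / 2) ∈ Icc 0 (π / 2) :=
    ⟨by positivity, mul_le_of_le_one_left pi_div_two_pos.le (sin_le_one α)⟩
  have harg {t : ℝ} (ht : t ∈ Icc (0 : ℝ) 1) :
      |(AffineMap.lineMap w₀ w₁ t).arg| ≤ sin α * (π / 2) :=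
    (convex_setOf_abs_arg_le hφ).lineMap_mem harg₀ harg₁ ht
  refine ⟨by simp only [AffineMap.lineMap_apply_zero],
    by simp only [AffineMap.lineMap_apply_one], fun t ht u hu ↦ ?_⟩
  rw [coneDist_undevelop hs ha hξ haξ hm hw₀ hw₁ harg₀ harg₁, coneDist_undevelop hs ha hξ haξ hm
    (hre t) (hre u) (harg ht) (harg hu), dist_lineMap_lineMap, Real.dist_eq, mul_comm]

lemma isMinSeg_undevelop_develop (hs : 0 < sin α) (ha : ‖a‖ = 1) (hξ : ‖ξ‖ = 1)
    (haξ : ⟪a, ξ⟫ = 0) {x y : En n} (hx : x = ‖x‖ • meridian a ξ (angle a x))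
    (hy : y = ‖y‖ • meridian a ξ (angle a y)) (hm : 0 < m)
    (hxm : (develop (sin α) a x).re = m) (hym : (develop (sin α) a y).re = m) :
    IsMinSeg (coneDist n α) (fun t ↦ undevelop (sin α) a ξ
      (AffineMap.lineMap (develop (sin α) a x) (develop (sin α) a y) t)) x y := by
  have hs₂ : sin α < 2 := (sin_le_one α).trans_lt one_lt_two
  simpa only [undevelop_develop hs hs₂ hx, undevelop_develop hs hs₂ hy] using
    isMinSeg_undevelop hs ha hξ haξ hm hxm hym (abs_arg_develop_le hs hs₂ a x)
      (abs_arg_develop_le hs hs₂ a y)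

lemma dist_develop_eq_coneDist (hs : 0 < sin α) (ha : ‖a‖ = 1) (hξ : ‖ξ‖ = 1)
    (haξ : ⟪a, ξ⟫ = 0) {x y : En n} (hx : x = ‖x‖ • meridian a ξ (angle a x))
    (hy : y = ‖y‖ • meridian a ξ (angle a y)) (hm : 0 < m)
    (hxm : (develop (sin α) a x).re = m) (hym : (develop (sin α) a y).re = m) :
    dist (develop (sin α) a x) (develop (sin α) a y) = coneDist n α x y := by
  have hs₂ : sin α < 2 := (sin_le_one α).trans_lt one_lt_two
  simpa only [undevelop_develop hs hs₂ hx, undevelop_develop hs hs₂ hy] using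
    (coneDist_undevelop hs ha hξ haξ hm hxm hym (abs_arg_develop_le hs hs₂ a x)
      (abs_arg_develop_le hs hs₂ a y)).symm

lemma IsMinSeg.map_eq_lineMap {d : En n → En n → ℝ} {γ : ℝ → En n} {p q : En n} {V : Type*}
    [NormedAddCommGroup V] [NormedSpace ℝ V] [StrictConvexSpace ℝ V] {f : En n → V}
    (hγ : IsMinSeg d γ p q) (hf : ∀ x y, dist (f x) (f y) ≤ d x y)
    (hpq : dist (f p) (f q) = d p q) {t : ℝ} (ht : t ∈ Icc (0 : ℝ) 1) :
    f (γ t) = AffineMap.lineMap (f p) (f q) t := by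
  obtain ⟨h₀, h₁, hd⟩ := hγ
  have hpt : dist (f p) (f (γ t)) ≤ t * dist (f p) (f q) := by
    have h := hd 0 unitInterval.zero_mem t ht
    rw [h₀, zero_sub, abs_neg, abs_of_nonneg ht.1, mul_comm, ← hpq] at h
    exact h ▸ hf p (γ t)
  have htq : dist (f (γ t)) (f q) ≤ (1 - t) * dist (f p) (f q) := by
    have h := hd t ht 1 unitInterval.one_mem
    rw [h₁, abs_sub_comm, abs_of_nonneg (sub_nonneg.2 ht.2), mul_comm, ← hpq] at h
    exact h ▸ hf (γ t) q
  have htri := dist_triangle (f p) (f (γ t)) (f q)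
  exact eq_lineMap_of_dist_eq_mul_of_dist_eq_mul (hpt.antisymm (by linarith))
    (htq.antisymm (by linarith))

end ConeDist

section Trace

variable {n : ℕ} {α ρ : ℝ} {a : En n}

lemma cos_sin_mul_pi_div_two_pos (hs₀ : 0 < sin α) (hs₁ : sin α < 1) :
    0 < cos (sin α * (π / 2)) := by
  have hpos : 0 < sin α * (π / 2) := mul_pos hs₀ pi_div_two_pos
  exact cos_pos_of_mem_Ioo ⟨by linarith [pi_pos], mul_lt_of_lt_one_left pi_div_two_pos hs₁⟩

theorem iUnion_isMinSeg_eq (hn : 2 ≤ n) (hs₀ : 0 < sin α) (hs₁ : sin α < 1) (hρ : 0 < ρ)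
    (ha : ‖a‖ = 1) :
    (⋃ γ ∈ {γ : ℝ → En n | IsMinSeg (coneDist n α) γ (ρ • a) (-(ρ • a))}, γ '' Icc 0 1) =
      {z | (develop (sin α) a z).re = ρ * cos (sin α * (π / 2))} := by
  have ha₀ : a ≠ 0 := norm_ne_zero_iff.1 (ha.trans_ne one_ne_zero)
  have hcos := cos_sin_mul_pi_div_two_pos hs₀ hs₁
  have hpolar := exists_meridian (Module.one_lt_rank_of_one_lt_finrank (R := ℝ) (M := En n)
    (by rwa [finrank_euclideanSpace_fin])) ha
  have hp (ξ : En n) := smul_self_eq_norm_smul_meridian ha ξ ρ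
  have hq (ξ : En n) := neg_smul ρ a ▸ smul_self_eq_norm_smul_meridian ha ξ (-ρ)
  have hsegment {w : ℂ} := mem_segment_develop_iff (sin α) ha hρ (w := w)
  have hpm := (hsegment.1 (left_mem_segment ℝ _ _)).1
  have hqm := (hsegment.1 (right_mem_segment ℝ _ _)).1
  rw [segment_eq_image_lineMap] at hsegment
  ext z
  simp only [mem_iUnion, mem_image, mem_ofPred_eq, exists_prop]
  constructor
  · rintro ⟨γ, hγ, t, ht, rfl⟩
    obtain ⟨ξ, hξ, haξ, -⟩ := hpolar a
    have hpq := dist_develop_eq_coneDist hs₀ ha hξ haξ (hp ξ) (hq ξ) (mul_pos hρ hcos) hpm hqm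
    have hline := hγ.map_eq_lineMap (dist_develop_le_coneDist α ha₀) hpq ht
    exact (hsegment.1 ⟨t, ht, hline.symm⟩).1
  · intro hz
    obtain ⟨ξ, hξ, haξ, hzξ⟩ := hpolar z
    have hseg := isMinSeg_undevelop_develop hs₀ ha hξ haξ (hp ξ) (hq ξ) (mul_pos hρ hcos) hpm hqm
    have hs₂ : sin α < 2 := hs₁.trans one_lt_two
    have hnorm : ‖z‖ ≤ ρ := le_of_mul_le_mul_right
      (hz ▸ norm_mul_cos_le_develop_re hs₀.le hs₂.le a z) hcos
    obtain ⟨t, ht, htz⟩ := hsegment.2 ⟨hz, (norm_develop (sin α) a z).trans_le hnorm⟩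
    exact ⟨_, hseg, t, ht, htz ▸ undevelop_develop hs₀ hs₂ hzξ⟩

end Trace

section LevelSet

/-- The radial projection of the unit sphere onto a positive level set of a continuous positively
homogeneous function which is positive off the origin. -/
def sphereHomeomorphLevelSet {E : Type*} [NormedAddCommGroup E] [NormedSpace ℝ E] {f : E → ℝ}
    (hf : Continuous f) (hf₀ : ∀ z ≠ 0, 0 < f z) (hsmul : ∀ r > 0, ∀ z, f (r • z) = r * f z)
    {m : ℝ} (hm : 0 < m) : ↥(Metric.sphere (0 : E) 1) ≃ₜ ↥{z | f z = m} :=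
  have hpos (u : Metric.sphere (0 : E) 1) : 0 < f u := hf₀ u (ne_zero_of_mem_unit_sphere u)
  have hzero : f 0 = 0 := by linarith [smul_zero (A := E) (2 : ℝ) ▸ hsmul 2 two_pos 0]
  have hne (z : {z | f z = m}) : (z : E) ≠ 0 := fun h ↦
    hm.ne (by rw [← hzero, ← h, z.2])
  { toFun u := ⟨(m / f u) • (u : E), by
      rw [mem_ofPred_eq, hsmul _ (div_pos hm (hpos u)), div_mul_cancel₀ _ (hpos u).ne']⟩
    invFun z := ⟨‖(z : E)‖⁻¹ • (z : E), by
      rw [mem_sphere_zero_iff_norm]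
      exact norm_smul_inv_norm (hne z)⟩
    left_inv u := by
      have hr : 0 < m / f u := div_pos hm (hpos u)
      ext1
      simp only [norm_smul, norm_of_nonneg hr.le, norm_eq_of_mem_sphere, mul_one,
        inv_smul_smul₀ hr.ne']
    right_inv z := by
      have hr : 0 < ‖(z : E)‖⁻¹ := inv_pos.2 (norm_pos_iff.2 (hne z))
      have hz : f z = m := z.2
      ext1
      simp only [hsmul _ hr, hz, div_mul_cancel_right₀ hm.ne', inv_smul_smul₀ hr.ne']
    continuous_toFun := by
      refine Continuous.subtype_mk (.smul (continuous_const.div ?_ ?_) continuous_subtype_val) _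
      · exact hf.comp continuous_subtype_val
      · exact fun u ↦ (hpos u).ne'
    continuous_invFun := by
      refine Continuous.subtype_mk (.smul (continuous_subtype_val.norm.inv₀ ?_)
        continuous_subtype_val) _
      exact fun z ↦ norm_ne_zero_iff.2 (hne z) }

lemma connectedComponentIn_compl_levelSet_subset {X : Type*} [TopologicalSpace X] {f : X → ℝ}
    (hf : Continuous f) {m : ℝ} {x : X} (hx : f x < m) :
    connectedComponentIn {z | f z = m}ᶜ x ⊆ {z | f z < m} := by
  intro z hz
  by_contra hzm
  obtain ⟨w, hw, hwm⟩ := isPreconnected_connectedComponentIn.intermediate_value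
    (mem_connectedComponentIn (F := {z | f z = m}ᶜ) hx.ne) hz hf.continuousOn
    ⟨hx.le, not_lt.1 hzm⟩
  exact connectedComponentIn_subset _ _ hw hwm

end LevelSet

end

theorem statement_7_general (n : ℕ) (hn : 2 ≤ n) (α ρ : ℝ) (hs₀ : 0 < sin α) (hs₁ : sin α < 1)
    (hρ : 0 < ρ) (a : En n) (ha : ‖a‖ = 1) :
    let p : En n := ρ • a
    let q : En n := -(ρ • a)
    let LT : Set (En n) :=
      ⋃ γ ∈ {γ : ℝ → En n | IsMinSeg (coneDist n α) γ p q}, γ '' Set.Icc 0 1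
    Nonempty (↥(Metric.sphere (0 : En n) 1) ≃ₜ ↥LT) ∧
    (0 : En n) ∉ LT ∧ Bornology.IsBounded (connectedComponentIn LTᶜ 0) := by
  intro p q LT
  have hcos := cos_sin_mul_pi_div_two_pos hs₀ hs₁
  have hm : 0 < ρ * cos (sin α * (π / 2)) := mul_pos hρ hcos
  have hLT : LT = {z | (develop (sin α) a z).re = ρ * cos (sin α * (π / 2))} :=
    iUnion_isMinSeg_eq hn hs₀ hs₁ hρ ha
  have hf : Continuous fun z ↦ (develop (sin α) a z).re :=
    Complex.continuous_re.comp (continuous_develop _ (norm_ne_zero_iff.1 (ha.trans_ne one_ne_zero)))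
  have hle (z : En n) : ‖z‖ * cos (sin α * (π / 2)) ≤ (develop (sin α) a z).re :=
    norm_mul_cos_le_develop_re hs₀.le (hs₁.trans one_lt_two).le a z
  have h₀ : (develop (sin α) a (0 : En n)).re < ρ * cos (sin α * (π / 2)) := by
    rwa [develop_zero, Complex.zero_re]
  rw [hLT]
  refine ⟨⟨sphereHomeomorphLevelSet hf (fun z hz ↦ ?_) (fun r hr z ↦ ?_) hm⟩, h₀.ne, ?_⟩
  · exact (mul_pos (norm_pos_iff.2 hz) hcos).trans_le (hle z)
  · rw [develop_smul _ _ _ hr, Complex.re_ofReal_mul]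
  · refine (Metric.isBounded_closedBall (x := (0 : En n)) (r := ρ)).subset
      ((connectedComponentIn_compl_levelSet_subset hf h₀).trans fun z hz ↦ ?_)
    exact mem_closedBall_zero_iff.2 (le_of_mul_le_mul_right ((hle z).trans hz.le) hcos)

/-- the trace of the minimising geodesics is a topological sphere.
For antipodal `p = ρa`, `q = -ρa` of `C_α^n` (`n ≥ 3`), the union `L^T_{p,q}` of the
images of all length-minimising geodesic segments from `p` to `q`, with the Euclidean
subspace topology, is homeomorphic to `S^{n-1}`; in particular the apex `o` lies in the
bounded component of `ℝⁿ \ L^T_{p,q}`. -/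
theorem statement_7 (n : ℕ) (hn : 3 ≤ n) (α ρ : ℝ) (hα : α ∈ Set.Ioo 0 (π / 2))
    (hρ : 0 < ρ) (a : En n) (ha : ‖a‖ = 1) :
    let p : En n := ρ • a
    let q : En n := -(ρ • a)
    let LT : Set (En n) :=
      ⋃ γ ∈ {γ : ℝ → En n | IsMinSeg (coneDist n α) γ p q}, γ '' Set.Icc 0 1
    Nonempty (↥(Metric.sphere (0 : En n) 1) ≃ₜ ↥LT) ∧
    (0 : En n) ∉ LT ∧ Bornology.IsBounded (connectedComponentIn LTᶜ 0) := by
  have hs₁ : sin α < 1 :=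
    sin_pi_div_two ▸ sin_lt_sin_of_lt_of_le_pi_div_two (by linarith [hα.1, pi_pos]) le_rfl hα.2
  have hs₀ : 0 < sin α := sin_pos_of_pos_of_lt_pi hα.1 (by linarith [hα.2, pi_pos])
  exact statement_7_general n (by lia) α ρ hs₀ hs₁ hρ a ha
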